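/- arXiv:2012.13380 — 2 statements merged into one kernel-verified Lean document; each statement's English description precedes it below -/
import Mathlib

section
/- For every real number x with 0 ≤ x ≤ 1/2 and every real number n ≥ 1, one has (1 - x/n)^n ≤ 1 - (7/9)·x. -/
/-- Lemma 4 of the paper: for `0 ≤ x ≤ 1/2` and real `n ≥ 1`,
`(1 - x/n)^n ≤ 1 - (7/9)·x`, where the power is the real power. -/
theorem stmt_0 (x n : ℝ) (hx0 : 0 ≤ x) (hx1 : x ≤ 1/2) (hn : 1 ≤ n) :
    (1 - x / n) ^ n ≤ 1 - (7/9) * x := by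
  have hn0 : 0 < n := by linarith
  have hb : 0 ≤ 1 - x / n := by
    have : x / n ≤ 1 := by
      rw [div_le_one hn0]
      linarith
    linarith
  have h1 : (1 - x / n) ^ n ≤ Real.exp (-x) := by
    have h := Real.rpow_le_rpow hb (Real.one_sub_le_exp_neg (x / n)) hn0.le
    rw [← Real.exp_mul] at h
    have e : -(x / n) * n = -x := by field_simp
    rwa [e] at h
  refine h1.trans ?_
  have h2 := Real.sum_le_exp_of_nonneg hx0 4
  simp only [Finset.sum_range_succ, Finset.sum_range_zero, Nat.factorial] at h2
  norm_num at h2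
  rw [Real.exp_neg, inv_le_iff_one_le_mul₀ (Real.exp_pos x)]
  have h3 : (1 - 7/9 * x) * (1 + x + x^2/2 + x^3/6) ≤ (1 - 7/9 * x) * Real.exp x :=
    mul_le_mul_of_nonneg_left h2 (by linarith)
  have hx2 : x^2 ≤ 1/4 := by nlinarith
  have hx3 : x^3 ≤ 1/8 := by nlinarith
  have h4 : 0 ≤ x * (2/9 - 5/18 * x - 2/9 * x^2 - 7/54 * x^3) :=
    mul_nonneg hx0 (by linarith)
  nlinarith
end

section
/- Let k ≥ 1, T > 1, α > 0 and ε > 0 be real numbers with k·T^{α/2} ≥ 2 and T^ε > (log T)/(2·log(18/11)). Then (T / (k·T^{α/2 + ε})) · (1 - 1/(k·T^{α/2}))^{k·T^{α/2 + ε}} < T^{-α/2} / k. -/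
/-- Deterministic core of Lemma 1 of the paper: for reals `k ≥ 1`, `T > 1`,
`α > 0`, `ε > 0` with `k·T^{α/2} ≥ 2` and `T^ε > (log T)/(2 log(18/11))`,
`(T/(k·T^{α/2+ε}))·(1 - 1/(k·T^{α/2}))^{k·T^{α/2+ε}} < T^{-α/2}/k`
(all powers are real powers). -/
theorem stmt_7 (k T α ε : ℝ) (hk : 1 ≤ k) (hT : 1 < T) (hα : 0 < α) (hε : 0 < ε)
    (h2 : 2 ≤ k * T ^ (α/2))
    (h : Real.log T / (2 * Real.log (18/11)) < T ^ ε) :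
    (T / (k * T ^ (α/2 + ε))) * (1 - 1 / (k * T ^ (α/2))) ^ (k * T ^ (α/2 + ε)) <
      T ^ (-(α/2)) / k := by
  have hT0 : 0 < T := by linarith
  have hk0 : 0 < k := by linarith
  have hx1 : 1 < T ^ ε := Real.one_lt_rpow hT hε
  rw [Real.rpow_add hT0, Real.rpow_neg hT0.le]
  have ha : 0 < T ^ (α/2) := Real.rpow_pos_of_pos hT0 _
  generalize T ^ ε = x at *
  generalize T ^ (α/2) = a at *
  have hm : 0 < k * a := by positivity
  have hR : a⁻¹ / k = 1 / (k * a) := by field_simp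
  rw [hR, ← mul_assoc]
  generalize k * a = m at *
  have hlp : 0 < Real.log (18/11) := Real.log_pos (by norm_num)
  have hl : 2 * Real.log (18/11) ≤ 1 := by
    have e : 2 * Real.log (18/11) = Real.log ((18/11)^2) := by
      rw [Real.log_pow]; norm_num
    rw [e, Real.log_le_iff_le_exp (by norm_num)]
    have := Real.exp_one_gt_d9
    norm_num at *
    linarith
  have hlog : Real.log T < x := by
    rw [div_lt_iff₀ (by positivity)] at h
    nlinarith
  have hTx : T < Real.exp x := (Real.log_lt_iff_lt_exp hT0).1 hlog
  have hb : 1 - 1 / m ≤ Real.exp (-(1/m)) := by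
    have := Real.add_one_le_exp (-(1/m)); linarith
  have hb0 : 0 ≤ 1 - 1 / m := by
    have : 1 / m ≤ 1 := by rw [div_le_one hm]; linarith
    linarith
  have hp : (1 - 1 / m) ^ (m * x) ≤ Real.exp (-x) := by
    calc (1 - 1 / m) ^ (m * x) ≤ Real.exp (-(1/m)) ^ (m * x) :=
          Real.rpow_le_rpow hb0 hb (by positivity)
      _ = Real.exp (-x) := by
          rw [← Real.exp_mul]; congr 1; field_simp
  have hx0 : 0 < x := by linarith
  calc T / (m * x) * (1 - 1 / m) ^ (m * x) ≤ T / (m * x) * Real.exp (-x) := by gcongr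
    _ < Real.exp x / (m * x) * Real.exp (-x) := by gcongr
    _ = 1 / (m * x) := by
        rw [Real.exp_neg]; field_simp
    _ < 1 / m := by
        apply one_div_lt_one_div_of_lt hm
        nlinarith
end
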